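/- For any nonempty set S ⊆ G and any x ∈ G, the expected return time to S satisfies E_x[T_S^+] ≤ (3/(1−λ)) · max( log(2e/π_min), 1/π(S) ). -/

import Mathlib

open MeasureTheory Finset
open scoped ENNReal

namespace HM

variable {G : Type*} [Fintype G] [DecidableEq G]

/-- `P` is a stochastic (transition) matrix. -/
def IsStochastic (P : Matrix G G ℝ) : Prop :=
  (∀ x y, 0 ≤ P x y) ∧ ∀ x, ∑ y, P x y = 1

/-- Irreducibility: every state reaches every other state. -/
def IsIrreducible (P : Matrix G G ℝ) : Prop :=
  ∀ x y : G, ∃ t : ℕ, 0 < (P ^ t) x y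

/-- Aperiodicity: the gcd of return times is `1` at every state. -/
def IsAperiodic (P : Matrix G G ℝ) : Prop :=
  ∀ x : G, ∀ d : ℕ, (∀ t : ℕ, 0 < (P ^ t) x x → d ∣ t) → d = 1

/-- `P` is reversible with respect to the full-support probability vector `pi`. -/
def IsReversible (P : Matrix G G ℝ) (pi : G → ℝ) : Prop :=
  (∀ x, 0 < pi x) ∧ (∑ x, pi x = 1) ∧ ∀ x y, pi x * P x y = pi y * P y x

variable [MeasurableSpace G]

/-- `μ x` is the law of the Markov chain with transition matrix `P` started at `x`:
all finite-dimensional (cylinder) probabilities are given by products of transition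
probabilities. -/
def IsMarkovChain (P : Matrix G G ℝ) (μ : G → Measure (ℕ → G)) : Prop :=
  (∀ x, IsProbabilityMeasure (μ x)) ∧
  ∀ (x : G) (t : ℕ) (w : ℕ → G),
    μ x {ω | ∀ i ≤ t, ω i = w i} =
      ENNReal.ofReal ((if w 0 = x then 1 else 0) * ∏ i ∈ Finset.range t, P (w i) (w (i + 1)))

/-- Hitting time `T_S = inf {t ≥ 0 : X_t ∈ S}`, with value `⊤` if `S` is never hit. -/
noncomputable def hit (S : Set G) (ω : ℕ → G) : ℕ∞ :=
  sInf ((↑) '' {n : ℕ | ω n ∈ S})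

/-- Return time `T_S^+ = inf {t ≥ 1 : X_t ∈ S}`, with value `⊤` if `S` is never hit. -/
noncomputable def hitPlus (S : Set G) (ω : ℕ → G) : ℕ∞ :=
  sInf ((↑) '' {n : ℕ | 1 ≤ n ∧ ω n ∈ S})

/-- The event `X_{T_S} = x` (in particular `T_S < ∞`). -/
def hitsAt (S : Set G) (x : G) : Set (ℕ → G) :=
  {ω | ∃ n : ℕ, hit S ω = (n : ℕ∞) ∧ ω n = x}

/-- Harmonic measure on `S` from `y`: `h_{y,S}(x) = Pr_y[X_{T_S} = x]`. -/
noncomputable def harm (μ : G → Measure (ℕ → G)) (S : Set G) (y x : G) : ℝ :=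
  (μ y (hitsAt S x)).toReal

/-- Harmonic measure on `S` from the stationary distribution:
`h_S(x) = ∑_y π(y) h_{y,S}(x)`. -/
noncomputable def harmStat (pi : G → ℝ) (μ : G → Measure (ℕ → G)) (S : Set G) (x : G) : ℝ :=
  ∑ y, pi y * harm μ S y x

/-- `π(S) = ∑_{x ∈ S} π(x)`. -/
noncomputable def piOf (pi : G → ℝ) (S : Set G) : ℝ :=
  ∑ x, S.indicator pi x

/-- `λ = max_{j > 1} |λ_j|`, via the variational characterization: the largest absolute
value of the quadratic form of `P` on the orthogonal complement of the constants in
`L²(π)`.  For a reversible chain this equals the largest absolute value of a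
non-Perron eigenvalue of `P`. -/
noncomputable def lam (P : Matrix G G ℝ) (pi : G → ℝ) : ℝ :=
  sSup {r : ℝ | ∃ f : G → ℝ, ∑ x, pi x * f x = 0 ∧ ∑ x, pi x * f x ^ 2 = 1 ∧
    r = |∑ x, pi x * (f x * ∑ y, P x y * f y)|}

/-- `π_min = min_x π(x)`. -/
noncomputable def pimin (pi : G → ℝ) : ℝ := ⨅ x, pi x

/-- `π_max = max_x π(x)`. -/
noncomputable def pimax (pi : G → ℝ) : ℝ := ⨆ x, pi x

/-- `u(P) = min_{x ≠ y} Pr_x[T_y < T_x^+]`. -/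
noncomputable def uP (μ : G → Measure (ℕ → G)) : ℝ :=
  sInf {r : ℝ | ∃ x y : G, x ≠ y ∧
    r = (μ x {ω | hit {y} ω < hitPlus {x} ω}).toReal}

/-- `E_x[T_S^+]` (as an extended nonnegative real, then converted to `ℝ`). -/
noncomputable def expHitPlus (μ : G → Measure (ℕ → G)) (S : Set G) (x : G) : ℝ :=
  (∫⁻ ω, (hitPlus S ω : ℝ≥0∞) ∂ μ x).toReal

/-- The number of distinct states visited strictly before the return time `T_S^+`,
i.e. `|{X_0, X_1, …, X_{T_S^+ − 1}}|`. -/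
noncomputable def visited (S : Set G) (ω : ℕ → G) : ℕ :=
  Set.ncard {g : G | ∃ n : ℕ, (n : ℕ∞) < hitPlus S ω ∧ ω n = g}



section Helpers

set_option linter.unusedSectionVars false

variable {G : Type*} [Fintype G] [DecidableEq G]

/-- weighted inner product -/
def ip (pi : G → ℝ) (f g : G → ℝ) : ℝ := ∑ x, pi x * (f x * g x)

/-- action of the transition matrix -/
def act (P : Matrix G G ℝ) (f : G → ℝ) : G → ℝ := fun x => ∑ y, P x y * f y

lemma act_add (P : Matrix G G ℝ) (f g : G → ℝ) : act P (f + g) = act P f + act P g := by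
  funext x; simp [act, mul_add, sum_add_distrib]

lemma act_smul (P : Matrix G G ℝ) (c : ℝ) (f : G → ℝ) : act P (c • f) = c • act P f := by
  funext x; simp only [act, Pi.smul_apply, smul_eq_mul, mul_sum]
  exact sum_congr rfl fun y _ => by ring

lemma ip_add_left (pi f g h : G → ℝ) : ip pi (f + g) h = ip pi f h + ip pi g h := by
  simp only [ip, Pi.add_apply, ← sum_add_distrib]
  exact sum_congr rfl fun y _ => by ring

lemma ip_smul_left (pi : G → ℝ) (c : ℝ) (f h : G → ℝ) : ip pi (c • f) h = c * ip pi f h := by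
  simp only [ip, Pi.smul_apply, smul_eq_mul, mul_sum]
  exact sum_congr rfl fun y _ => by ring

lemma ip_comm (pi f g : G → ℝ) : ip pi f g = ip pi g f := by
  simp only [ip]
  exact sum_congr rfl fun y _ => by ring

lemma ip_add_right (pi f g h : G → ℝ) : ip pi h (f + g) = ip pi h f + ip pi h g := by
  rw [ip_comm, ip_add_left, ip_comm pi f, ip_comm pi g]

lemma ip_smul_right (pi : G → ℝ) (c : ℝ) (f h : G → ℝ) : ip pi h (c • f) = c * ip pi h f := by
  rw [ip_comm, ip_smul_left, ip_comm]

lemma ip_act {P : Matrix G G ℝ} {pi : G → ℝ} (hrev : IsReversible P pi) (f g : G → ℝ) :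
    ip pi (act P f) g = ip pi f (act P g) := by
  simp only [ip, act, mul_sum, sum_mul]
  rw [sum_comm]
  refine sum_congr rfl fun y _ => sum_congr rfl fun x _ => ?_
  have := hrev.2.2 x y
  linear_combination (f y * g x) * this

lemma ip_self_nonneg {P : Matrix G G ℝ} {pi : G → ℝ} (hrev : IsReversible P pi) (f : G → ℝ) :
    0 ≤ ip pi f f :=
  sum_nonneg fun x _ => mul_nonneg (hrev.1 x).le (mul_self_nonneg _)

lemma ip_self_zero {P : Matrix G G ℝ} {pi : G → ℝ} (hrev : IsReversible P pi) {f : G → ℝ}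
    (h : ip pi f f = 0) : f = 0 := by
  funext x
  have := (sum_eq_zero_iff_of_nonneg
    (fun x _ => mul_nonneg (hrev.1 x).le (mul_self_nonneg (f x)))).1 h x (mem_univ x)
  rcases mul_eq_zero.1 this with h | h
  · exact absurd h (hrev.1 x).ne'
  · simpa using h

lemma act_one {P : Matrix G G ℝ} (hP : IsStochastic P) : act P 1 = 1 := by
  funext x; simp [act, hP.2 x]

lemma mean_act {P : Matrix G G ℝ} {pi : G → ℝ} (hP : IsStochastic P) (hrev : IsReversible P pi)
    (f : G → ℝ) : ip pi 1 (act P f) = ip pi 1 f := by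
  rw [← ip_act hrev, act_one hP]

lemma ip_one_one {P : Matrix G G ℝ} {pi : G → ℝ} (hrev : IsReversible P pi) :
    ip pi 1 1 = 1 := by
  simp [ip, hrev.2.1]

/-- the Dirichlet form identity -/
lemma dirichlet {P : Matrix G G ℝ} {pi : G → ℝ} (hP : IsStochastic P) (hrev : IsReversible P pi)
    (f : G → ℝ) (e : ℝ) (he : e * e = 1) :
    ∑ x, ∑ y, pi x * P x y * (f x - e * f y) ^ 2 = 2 * (ip pi f f - e * ip pi f (act P f)) := by
  have h1 : ∑ x, ∑ y, pi x * P x y * (f x * f x) = ip pi f f := by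
    simp only [ip]
    refine sum_congr rfl fun x _ => ?_
    rw [← sum_mul, ← mul_sum, hP.2 x, mul_one]
  have h2 : ∑ x, ∑ y, pi x * P x y * (f y * f y) = ip pi f f := by
    rw [sum_comm, ← h1]
    refine sum_congr rfl fun x _ => sum_congr rfl fun y _ => ?_
    rw [hrev.2.2 y x]
  have h3 : ∑ x, ∑ y, pi x * P x y * (f x * f y) = ip pi f (act P f) := by
    simp only [ip, act, mul_sum]
    exact sum_congr rfl fun x _ => sum_congr rfl fun y _ => by ring
  have : ∀ x y, pi x * P x y * (f x - e * f y) ^ 2 = pi x * P x y * (f x * f x)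
      + pi x * P x y * (f y * f y) - 2 * e * (pi x * P x y * (f x * f y)) := by
    intro x y
    linear_combination (pi x * P x y * f y * f y) * he
  simp only [this, sum_add_distrib, sum_sub_distrib, ← mul_sum, h1, h2, h3]
  ring

lemma edge_pow {P : Matrix G G ℝ} (hP : IsStochastic P) (f : G → ℝ) (e : ℝ)
    (h : ∀ x y, 0 < P x y → f x = e * f y) (t : ℕ) :
    ∀ x y, 0 < (P ^ t) x y → f x = e ^ t * f y := by
  induction t with
  | zero =>
    intro x y hxy
    by_cases hh : x = y
    · simp [hh]
    · simp [Matrix.one_apply, hh] at hxy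
  | succ t ih =>
    intro x y hxy
    rw [pow_succ, Matrix.mul_apply] at hxy
    obtain ⟨z, -, hz⟩ := exists_lt_of_sum_lt (f := fun _ : G => (0:ℝ)) (s := univ)
      (by simpa using hxy)
    have hzy : 0 < P z y := by
      rcases (hP.1 z y).eq_or_lt with h0 | h0
      · rw [← h0] at hz; simp at hz
      · exact h0
    have hxz : 0 < (P ^ t) x z := by
      by_contra hc
      exact absurd hz (not_lt.2 (mul_nonpos_of_nonpos_of_nonneg (not_lt.1 hc) hzy.le))
    rw [ih x z hxz, h z y hzy]; ring

/-- the unit sphere of mean zero functions -/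
def sph (pi : G → ℝ) : Set (G → ℝ) := {f | ip pi 1 f = 0 ∧ ip pi f f = 1}

lemma lam_eq (P : Matrix G G ℝ) (pi : G → ℝ) :
    lam P pi = sSup ((fun f => |ip pi f (act P f)|) '' sph pi) := by
  unfold lam
  congr 1
  ext r
  simp only [Set.mem_setOf_eq, Set.mem_image, sph, ip, act, Pi.one_apply, one_mul, sq]
  constructor
  · rintro ⟨f, h1, h2, h3⟩; exact ⟨f, ⟨h1, h2⟩, h3.symm⟩
  · rintro ⟨f, ⟨h1, h2⟩, h3⟩; exact ⟨f, h1, h2, h3.symm⟩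

lemma sph_compact {P : Matrix G G ℝ} {pi : G → ℝ} (hrev : IsReversible P pi) :
    IsCompact (sph pi) := by
  refine Metric.isCompact_of_isClosed_isBounded ?_ ?_
  · apply IsClosed.inter
    · exact isClosed_eq (by unfold ip; fun_prop) continuous_const
    · exact isClosed_eq (by unfold ip; fun_prop) continuous_const
  · have hsub : sph pi ⊆ Set.pi Set.univ
        (fun x => Set.Icc (-(1 + 1 / pi x)) (1 + 1 / pi x)) := by
      intro f hf x _
      have h1 : pi x * (f x * f x) ≤ 1 := by
        rw [← hf.2]
        exact single_le_sum (f := fun x => pi x * (f x * f x))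
          (fun x _ => mul_nonneg (hrev.1 x).le (mul_self_nonneg _)) (mem_univ x)
      have h2 : f x * f x ≤ 1 / pi x := by
        rw [le_div_iff₀ (hrev.1 x)]; linarith
      rw [Set.mem_Icc]
      constructor <;> nlinarith [sq_nonneg (f x + 1), sq_nonneg (f x - 1)]
    refine Bornology.IsBounded.subset ?_ hsub
    exact Bornology.IsBounded.pi fun x => Metric.isBounded_Icc _ _

lemma cont_form (P : Matrix G G ℝ) (pi : G → ℝ) :
    Continuous (fun f : G → ℝ => |ip pi f (act P f)|) := by
  unfold ip act; fun_prop

lemma lam_nonneg (P : Matrix G G ℝ) (pi : G → ℝ) : 0 ≤ lam P pi := by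
  rw [lam_eq]
  apply Real.sSup_nonneg
  rintro _ ⟨f, _, rfl⟩
  exact abs_nonneg _

lemma lam_lt_one {P : Matrix G G ℝ} {pi : G → ℝ} (hP : IsStochastic P) (hirr : IsIrreducible P)
    (hap : IsAperiodic P) (hrev : IsReversible P pi) : lam P pi < 1 := by
  rw [lam_eq]
  rcases (sph pi).eq_empty_or_nonempty with h | h
  · simp [h]
  obtain ⟨f, hf, hs⟩ := (sph_compact hrev).exists_sSup_image_eq h (cont_form P pi).continuousOn
  rw [hs]
  have hne : f ≠ 0 := by
    rintro rfl
    have := hf.2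
    simp [ip] at this
  have key : ∀ e : ℝ, e * e = 1 → 1 ≤ e * ip pi f (act P f) →
      ∀ t : ℕ, ∀ x y, 0 < (P ^ t) x y → f x = e ^ t * f y := by
    intro e he h1
    have hd := dirichlet hP hrev f e he
    rw [hf.2] at hd
    have nn : ∀ x y, 0 ≤ pi x * P x y * (f x - e * f y) ^ 2 := fun x y =>
      mul_nonneg (mul_nonneg (hrev.1 x).le (hP.1 x y)) (sq_nonneg _)
    have h0 : ∑ x, ∑ y, pi x * P x y * (f x - e * f y) ^ 2 = 0 :=
      le_antisymm (by rw [hd]; linarith) (sum_nonneg fun x _ => sum_nonneg fun y _ => nn x y)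
    apply fun hh t => edge_pow hP f e hh t
    intro x y hxy
    have h2 := (sum_eq_zero_iff_of_nonneg (fun x _ => sum_nonneg fun y _ => nn x y)).1 h0 x
      (mem_univ x)
    have h3 := (sum_eq_zero_iff_of_nonneg (fun y _ => nn x y)).1 h2 y (mem_univ y)
    have h4 : 0 < pi x * P x y := mul_pos (hrev.1 x) hxy
    rcases mul_eq_zero.1 h3 with h | h
    · exact absurd h h4.ne'
    · have := pow_eq_zero_iff (two_ne_zero) |>.1 h
      linarith
  by_contra hc
  rcases le_abs.1 (not_lt.1 hc) with h1 | h1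
  · have hk := key 1 (by norm_num) (by linarith)
    apply hne
    funext x
    have hcst : ∀ y, f y = f x := fun y => by
      obtain ⟨t, ht⟩ := hirr y x
      simpa using hk t y x ht
    have := hf.1
    simp only [ip, hcst, Pi.one_apply, one_mul, ← sum_mul, hrev.2.1] at this
    simpa using this
  · have hk := key (-1) (by norm_num) (by linarith)
    obtain ⟨x, hx⟩ := Function.ne_iff.1 hne
    have := hap x 2 (fun t ht => by
      have h2 := hk t x x ht
      rcases Nat.even_or_odd t with h | h
      · exact h.two_dvd
      · rw [h.neg_one_pow] at h2
        exact absurd (by linarith : f x = 0) hx)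
    omega

lemma lam_form {P : Matrix G G ℝ} {pi : G → ℝ} (hrev : IsReversible P pi) (f : G → ℝ)
    (hf : ip pi 1 f = 0) : |ip pi f (act P f)| ≤ lam P pi * ip pi f f := by
  rcases (ip_self_nonneg hrev f).eq_or_lt with h | h
  · have := ip_self_zero hrev h.symm
    subst this
    simp [ip]
  · set N := ip pi f f with hN
    have hs : (√N)⁻¹ * (√N)⁻¹ = N⁻¹ := by
      rw [← mul_inv, Real.mul_self_sqrt h.le]
    have hmem : ((√N)⁻¹ • f) ∈ sph pi := by
      refine ⟨by rw [ip_smul_right, hf, mul_zero], ?_⟩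
      rw [ip_smul_right, ip_smul_left, ← hN, ← mul_assoc, hs, inv_mul_cancel₀ h.ne']
    have h1 : |ip pi ((√N)⁻¹ • f) (act P ((√N)⁻¹ • f))| ≤ lam P pi := by
      rw [lam_eq]
      exact le_csSup ((sph_compact hrev).image (cont_form P pi)).bddAbove ⟨_, hmem, rfl⟩
    rw [act_smul, ip_smul_right, ip_smul_left, ← mul_assoc, hs, abs_mul,
      abs_of_pos (inv_pos.2 h), inv_mul_le_iff₀ h] at h1
    linarith

lemma contraction {P : Matrix G G ℝ} {pi : G → ℝ} (hP : IsStochastic P)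
    (hrev : IsReversible P pi) (f : G → ℝ) (hf : ip pi 1 f = 0) :
    ip pi (act P f) (act P f) ≤ lam P pi ^ 2 * ip pi f f := by
  set g := act P f with hg
  have hg0 : ip pi 1 g = 0 := by rw [hg, mean_act hP hrev, hf]
  set L := lam P pi with hL
  have hL0 : 0 ≤ L := lam_nonneg P pi
  have key : ∀ s : ℝ, 4 * s * ip pi g g ≤ 2 * L * (ip pi f f + s ^ 2 * ip pi g g) := by
    intro s
    have h1 := (abs_le.1 (lam_form hrev (f + s • g)
      (by rw [ip_add_right, ip_smul_right, hf, hg0]; ring))).2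
    have h2 := (abs_le.1 (lam_form hrev (f + (-s) • g)
      (by rw [ip_add_right, ip_smul_right, hf, hg0]; ring))).1
    simp only [act_add, act_smul, ip_add_left, ip_add_right, ip_smul_left, ip_smul_right] at h1 h2
    rw [← hg] at h1 h2
    have h3 : ip pi f (act P g) = ip pi g g := by rw [← ip_act hrev]
    rw [h3, ip_comm pi g f] at h1 h2
    rw [← hL] at h1 h2
    linarith
  have hgg := ip_self_nonneg hrev g
  rcases hL0.eq_or_lt with h | h
  · have := key 1
    rw [← h] at this ⊢
    nlinarith
  · have := key L⁻¹
    have e1 : L * (4 * L⁻¹ * ip pi g g) = 4 * ip pi g g := by field_simp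
    have e2 : L * (2 * L * (ip pi f f + L⁻¹ ^ 2 * ip pi g g)) =
      2 * L ^ 2 * ip pi f f + 2 * ip pi g g := by field_simp
    have := mul_le_mul_of_nonneg_left this h.le
    rw [e1, e2] at this
    linarith

lemma iter_contraction {P : Matrix G G ℝ} {pi : G → ℝ} (hP : IsStochastic P)
    (hrev : IsReversible P pi) (f : G → ℝ) (hf : ip pi 1 f = 0) (k : ℕ) :
    ip pi 1 ((act P)^[k] f) = 0 ∧
    ip pi ((act P)^[k] f) ((act P)^[k] f) ≤ (lam P pi ^ k) ^ 2 * ip pi f f := by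
  induction k with
  | zero => simp [hf]
  | succ k ih =>
    rw [Function.iterate_succ_apply']
    refine ⟨by rw [mean_act hP hrev, ih.1], ?_⟩
    refine (contraction hP hrev _ ih.1).trans ?_
    calc lam P pi ^ 2 * _ ≤ lam P pi ^ 2 * ((lam P pi ^ k) ^ 2 * ip pi f f) :=
          mul_le_mul_of_nonneg_left ih.2 (sq_nonneg _)
      _ = _ := by ring

lemma iter_add (P : Matrix G G ℝ) (f g : G → ℝ) (k : ℕ) :
    (act P)^[k] (f + g) = (act P)^[k] f + (act P)^[k] g := by
  induction k with
  | zero => simp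
  | succ k ih => simp only [Function.iterate_succ_apply', ih, act_add]

lemma iter_smul (P : Matrix G G ℝ) (c : ℝ) (f : G → ℝ) (k : ℕ) :
    (act P)^[k] (c • f) = c • (act P)^[k] f := by
  induction k with
  | zero => simp
  | succ k ih => simp only [Function.iterate_succ_apply', ih, act_smul]

lemma iter_one {P : Matrix G G ℝ} (hP : IsStochastic P) (k : ℕ) : (act P)^[k] 1 = 1 := by
  induction k with
  | zero => simp
  | succ k ih => simp only [Function.iterate_succ_apply', ih, act_one hP]

lemma act_mono {P : Matrix G G ℝ} (hP : IsStochastic P) {f g : G → ℝ} (h : f ≤ g) :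
    act P f ≤ act P g :=
  fun x => sum_le_sum fun y _ => mul_le_mul_of_nonneg_left (h y) (hP.1 x y)

lemma iter_mono {P : Matrix G G ℝ} (hP : IsStochastic P) {f g : G → ℝ} (h : f ≤ g) (k : ℕ) :
    (act P)^[k] f ≤ (act P)^[k] g := by
  induction k with
  | zero => simpa
  | succ k ih => simp only [Function.iterate_succ_apply']; exact act_mono hP ih

lemma iter_sum (P : Matrix G G ℝ) {ι : Type*} (s : Finset ι) (F : ι → G → ℝ) (k : ℕ) :
    (act P)^[k] (∑ i ∈ s, F i) = ∑ i ∈ s, (act P)^[k] (F i) := by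
  classical
  induction s using Finset.induction_on with
  | empty =>
    have := iter_smul P 0 0 k
    simpa using this
  | insert a s ha ih => rw [sum_insert ha, sum_insert ha, iter_add, ih]

lemma pimin_le (pi : G → ℝ) (x : G) : pimin pi ≤ pi x :=
  ciInf_le (Set.finite_range pi).bddBelow x

lemma pimin_pos {P : Matrix G G ℝ} {pi : G → ℝ} (hrev : IsReversible P pi) (x : G) :
    0 < pimin pi := by
  haveI : Nonempty G := ⟨x⟩
  obtain ⟨y, hy⟩ := exists_eq_ciInf_of_finite (f := pi)
  unfold pimin
  rw [← hy]; exact hrev.1 y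

/-- after mixing, the kernel is at most twice the stationary measure, on point masses -/
lemma mix_point {P : Matrix G G ℝ} {pi : G → ℝ} (hP : IsStochastic P)
    (hrev : IsReversible P pi) (k : ℕ) (hk : lam P pi ^ k ≤ pimin pi) (x y : G) :
    (act P)^[k] (Pi.single y 1) x ≤ 2 * pi y := by
  have hm := pimin_pos hrev x
  have hip : ∀ g : G → ℝ, ip pi (Pi.single y 1) g = pi y * g y := by
    intro g
    unfold ip
    rw [sum_eq_single y]
    · simp
    · intro b _ hb; simp [Pi.single_eq_of_ne hb]
    · simp
  set f : G → ℝ := Pi.single y 1 + (-pi y) • (1 : G → ℝ) with hfdef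
  have hf0 : ip pi 1 f = 0 := by
    rw [hfdef, ip_add_right, ip_smul_right, ip_one_one hrev, ip_comm, hip]; simp
  have hff : ip pi f f ≤ pi y := by
    have : ip pi f f = pi y * f y := by
      nth_rewrite 1 [hfdef]
      rw [ip_add_left, ip_smul_left, hf0, hip]; ring
    rw [this]
    have : f y = 1 - pi y := by simp [hfdef]; ring
    rw [this]
    nlinarith [hrev.1 y]
  have hit := (iter_contraction hP hrev f hf0 k).2
  set g := (act P)^[k] f with hg
  have hgx : pi x * (g x * g x) ≤ ip pi g g :=
    single_le_sum (f := fun x => pi x * (g x * g x))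
          (fun x _ => mul_nonneg (hrev.1 x).le (mul_self_nonneg _)) (mem_univ x)
  have hLk : 0 ≤ lam P pi ^ k := pow_nonneg (lam_nonneg _ _) _
  have hsq : (lam P pi ^ k) ^ 2 ≤ pimin pi ^ 2 := pow_le_pow_left₀ hLk hk 2
  have hle : g x ≤ pi y := by
    have h1 : pi x * (g x * g x) ≤ pimin pi ^ 2 * pi y :=
      hgx.trans (hit.trans (mul_le_mul hsq hff (ip_self_nonneg hrev f) (sq_nonneg _)))
    have h2 : pimin pi * (g x * g x) ≤ pi x * (g x * g x) :=
      mul_le_mul_of_nonneg_right (pimin_le pi x) (mul_self_nonneg _)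
    have h3 : g x * g x ≤ pimin pi * pi y := by
      have : pimin pi * (g x * g x) ≤ pimin pi * (pimin pi * pi y) := by nlinarith
      exact le_of_mul_le_mul_left this hm
    have h4 : g x * g x ≤ pi y * pi y :=
      h3.trans (mul_le_mul_of_nonneg_right (pimin_le pi y) (hrev.1 y).le)
    exact (abs_le_of_sq_le_sq' (by simpa [sq] using h4) (hrev.1 y).le).2
  have : g x = (act P)^[k] (Pi.single y 1) x - pi y := by
    rw [hg, hfdef, iter_add, iter_smul, iter_one hP]; simp; ring
  linarith

lemma mix {P : Matrix G G ℝ} {pi : G → ℝ} (hP : IsStochastic P)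
    (hrev : IsReversible P pi) (k : ℕ) (hk : lam P pi ^ k ≤ pimin pi) (x : G)
    (h : G → ℝ) (hh : 0 ≤ h) :
    (act P)^[k] h x ≤ 2 * ip pi 1 h := by
  have : h = ∑ y, h y • (Pi.single y 1 : G → ℝ) := by
    funext z
    simp [Finset.sum_apply, Pi.single_apply]
  rw [this, iter_sum, ← this, Finset.sum_apply]
  simp only [iter_smul, Pi.smul_apply, smul_eq_mul, ip, mul_sum, Pi.one_apply, one_mul]
  refine sum_le_sum fun y _ => ?_
  have := mul_le_mul_of_nonneg_left (mix_point hP hrev k hk x y) (hh y)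
  linarith

open Classical in
/-- Killing on `S`. -/
noncomputable def kill (S : Set G) (f : G → ℝ) : G → ℝ := fun x => if x ∈ S then 0 else f x

/-- `surv n x` is the probability of avoiding `S` at times `1..n`. -/
noncomputable def surv (P : Matrix G G ℝ) (S : Set G) : ℕ → G → ℝ
  | 0 => 1
  | n + 1 => act P (kill S (surv P S n))

lemma kill_le {S : Set G} {f : G → ℝ} (hf : 0 ≤ f) : kill S f ≤ f := by
  intro x; unfold kill; split_ifs
  · exact hf x
  · exact le_rfl

lemma kill_nonneg {S : Set G} {f : G → ℝ} (hf : 0 ≤ f) : 0 ≤ kill S f := by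
  intro x; unfold kill; split_ifs
  · exact le_rfl
  · exact hf x

lemma act_nonneg {P : Matrix G G ℝ} (hP : IsStochastic P) {f : G → ℝ} (hf : 0 ≤ f) :
    0 ≤ act P f := fun x => sum_nonneg fun y _ => mul_nonneg (hP.1 x y) (hf y)

lemma surv_nonneg {P : Matrix G G ℝ} (hP : IsStochastic P) (S : Set G) (n : ℕ) :
    0 ≤ surv P S n := by
  induction n with
  | zero => exact zero_le_one
  | succ n ih => exact act_nonneg hP (kill_nonneg ih)

lemma surv_le_one {P : Matrix G G ℝ} (hP : IsStochastic P) (S : Set G) (n : ℕ) :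
    surv P S n ≤ 1 := by
  induction n with
  | zero => exact le_rfl
  | succ n ih =>
    rw [← act_one hP]
    exact act_mono hP ((kill_le (surv_nonneg hP S n)).trans ih)

lemma surv_le_iter {P : Matrix G G ℝ} (hP : IsStochastic P) (S : Set G) (k n : ℕ) :
    surv P S (n + k + 1) ≤ (act P)^[k + 1] (kill S (surv P S n)) := by
  induction k with
  | zero => exact le_rfl
  | succ k ih =>
    rw [Function.iterate_succ_apply']
    exact act_mono hP ((kill_le (surv_nonneg hP S _)).trans ih)

lemma cs_weighted {P : Matrix G G ℝ} {pi : G → ℝ} (hrev : IsReversible P pi) (f g : G → ℝ) :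
    ip pi f g ^ 2 ≤ ip pi f f * ip pi g g := by
  have hd : discrim (ip pi g g) (2 * ip pi f g) (ip pi f f) ≤ 0 := by
    apply discrim_le_zero
    intro s
    have := ip_self_nonneg hrev (f + s • g)
    simp only [ip_add_left, ip_add_right, ip_smul_left, ip_smul_right] at this
    rw [ip_comm pi g f] at this
    linarith
  unfold discrim at hd
  linarith

lemma form_kill {P : Matrix G G ℝ} {pi : G → ℝ} (hP : IsStochastic P) 
    (hrev : IsReversible P pi) (hlam : lam P pi < 1) (S : Set G) (f : G → ℝ)
    (hf : ∀ x ∈ S, f x = 0) :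
    (1 - lam P pi) * piOf pi S * ip pi f f ≤ ip pi f f - ip pi f (act P f) := by
  set c := ip pi 1 f with hc
  have h1 := (abs_le.1 (lam_form hrev (f + (-c) • (1 : G → ℝ))
    (by rw [ip_add_right, ip_smul_right, ip_one_one hrev]; ring))).2
  simp only [act_add, act_smul, act_one hP, ip_add_left, ip_add_right, ip_smul_left,
    ip_smul_right, ip_one_one hrev, mean_act hP hrev] at h1
  rw [ip_comm pi f 1, ← hc] at h1
  have h2 := cs_weighted hrev (kill S 1) f
  have e1 : ip pi (kill S 1) f = c := by
    rw [hc]; unfold ip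
    refine sum_congr rfl fun x _ => ?_
    by_cases hx : x ∈ S
    · simp [kill, hx, hf x hx]
    · simp [kill, hx]
  have e2 : ip pi (kill S 1) (kill S 1) = 1 - piOf pi S := by
    rw [← hrev.2.1]; unfold ip piOf
    rw [← sum_sub_distrib]
    refine sum_congr rfl fun x _ => ?_
    by_cases hx : x ∈ S
    · simp [kill, hx]
    · simp [kill, hx]
  rw [e1, e2] at h2
  have h3 := mul_le_mul_of_nonneg_left h2 (by linarith : 0 ≤ 1 - lam P pi)
  nlinarith

lemma piOf_pos {P : Matrix G G ℝ} {pi : G → ℝ} (hrev : IsReversible P pi) {S : Set G}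
    (hS : S.Nonempty) : 0 < piOf pi S := by
  obtain ⟨x, hx⟩ := hS
  unfold piOf
  refine sum_pos' (fun y _ => Set.indicator_nonneg (fun z _ => (hrev.1 z).le) y)
    ⟨x, mem_univ x, ?_⟩
  rw [Set.indicator_of_mem hx]; exact hrev.1 x

lemma green {P : Matrix G G ℝ} {pi : G → ℝ} (hP : IsStochastic P) 
    (hrev : IsReversible P pi) (hlam : lam P pi < 1) {S : Set G} (hS : S.Nonempty) (n : ℕ) :
    ip pi 1 (∑ t ∈ range n, kill S (surv P S t)) ≤ 1 / ((1 - lam P pi) * piOf pi S) := by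
  set h := ∑ t ∈ range n, kill S (surv P S t) with hh
  have hh0 : 0 ≤ h := sum_nonneg fun t _ => kill_nonneg (surv_nonneg hP S t)
  have hhS : ∀ x ∈ S, h x = 0 := by
    intro x hx
    rw [hh, Finset.sum_apply]
    exact sum_eq_zero fun t _ => by simp [kill, hx]
  have h1 := form_kill hP hrev hlam S h hhS
  have hact : act P h = ∑ t ∈ range n, surv P S (t + 1) := by
    have := iter_sum P (range n) (fun t => kill S (surv P S t)) 1
    exact this
  have h2 : ip pi h h - ip pi h (act P h) ≤ ip pi 1 h := by
    unfold ip
    rw [← sum_sub_distrib]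
    refine sum_le_sum fun x _ => ?_
    rw [← mul_sub]
    refine mul_le_mul_of_nonneg_left ?_ (hrev.1 x).le
    rw [← mul_sub, mul_comm]
    refine mul_le_mul_of_nonneg_right ?_ (hh0 x)
    by_cases hx : x ∈ S
    · rw [hhS x hx, zero_sub]
      have := act_nonneg hP hh0 x
      simp at this ⊢; linarith
    · rw [hact, hh, Finset.sum_apply, Finset.sum_apply]
      have : ∀ t, kill S (surv P S t) x = surv P S t x := fun t => by simp [kill, hx]
      simp only [this]
      have h5 := Finset.sum_range_sub (fun t => surv P S t x) n
      rw [sum_sub_distrib] at h5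
      have h6 := surv_nonneg hP S n x
      simp only [surv, Pi.one_apply, Pi.zero_apply] at h5 h6 ⊢
      linarith
  have h3 := cs_weighted hrev 1 h
  rw [ip_one_one hrev, one_mul] at h3
  set H := ip pi 1 h
  have ha : 0 < (1 - lam P pi) * piOf pi S := mul_pos (by linarith) (piOf_pos hrev hS)
  rw [le_div_iff₀ ha]
  have h4 : (1 - lam P pi) * piOf pi S * H ^ 2 ≤ H :=
    (mul_le_mul_of_nonneg_left h3 ha.le).trans (h1.trans h2)
  by_contra hc
  push Not at hc
  have hH : 0 < H := by
    by_contra hneg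
    nlinarith
  nlinarith

/-- real-variable part of the bound -/
lemma surv_sum {P : Matrix G G ℝ} {pi : G → ℝ} (hP : IsStochastic P) (hirr : IsIrreducible P)
    (hap : IsAperiodic P) (hrev : IsReversible P pi) {S : Set G} (hS : S.Nonempty) (x : G)
    (n : ℕ) :
    ∑ t ∈ range n, surv P S t x ≤ 3 / (1 - lam P pi) *
      max (Real.log (2 * Real.exp 1 / pimin pi)) (1 / piOf pi S) := by
  have hlam := lam_lt_one hP hirr hap hrev
  have hlam0 := lam_nonneg P pi
  have hm := pimin_pos hrev x
  have hb := piOf_pos hrev hS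
  set g := 1 - lam P pi with hg
  have hg0 : 0 < g := by linarith
  have hm1 : pimin pi ≤ 1 := by
    rw [← hrev.2.1]
    exact (pimin_le pi x).trans (single_le_sum (fun y _ => (hrev.1 y).le) (mem_univ x))
  have hlog : 0 ≤ Real.log (1 / pimin pi) := Real.log_nonneg (by rw [le_div_iff₀ hm]; linarith)
  set k := ⌊Real.log (1 / pimin pi) / g⌋₊ with hk
  have hk1 : (k : ℝ) ≤ Real.log (1 / pimin pi) / g := Nat.floor_le (by positivity)
  have hk2 : Real.log (1 / pimin pi) / g < k + 1 := Nat.lt_floor_add_one _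
  have hmix : lam P pi ^ (k + 1) ≤ pimin pi := by
    have h1 : lam P pi ≤ Real.exp (-g) := by
      have := Real.add_one_le_exp (-g); linarith
    calc lam P pi ^ (k + 1) ≤ Real.exp (-g) ^ (k + 1) := pow_le_pow_left₀ hlam0 h1 _
      _ = Real.exp (((k + 1 : ℕ) : ℝ) * (-g)) := by rw [Real.exp_nat_mul]
      _ ≤ Real.exp (Real.log (pimin pi)) := by
        apply Real.exp_le_exp.2
        rw [div_lt_iff₀ hg0] at hk2
        rw [one_div, Real.log_inv] at hk2
        push_cast
        linarith
      _ = pimin pi := Real.exp_log hm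
  have hsum : ∑ t ∈ range (k + 1 + n), surv P S t x ≤ (k + 1) + 2 * (1 / (g * piOf pi S)) := by
    rw [sum_range_add]
    refine add_le_add ?_ ?_
    · calc ∑ t ∈ range (k + 1), surv P S t x ≤ ∑ t ∈ range (k + 1), (1 : ℝ) :=
            sum_le_sum fun t _ => surv_le_one hP S t x
        _ = _ := by simp
    · calc ∑ t ∈ range n, surv P S (k + 1 + t) x
          ≤ ∑ t ∈ range n, (act P)^[k + 1] (kill S (surv P S t)) x := by
            refine sum_le_sum fun t _ => ?_
            have := surv_le_iter hP S k t x
            rwa [show k + 1 + t = t + k + 1 by ring]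
        _ = (act P)^[k + 1] (∑ t ∈ range n, kill S (surv P S t)) x := by
            rw [iter_sum, Finset.sum_apply]
        _ ≤ 2 * ip pi 1 (∑ t ∈ range n, kill S (surv P S t)) :=
            mix hP hrev _ hmix x _ (sum_nonneg fun t _ => kill_nonneg (surv_nonneg hP S t))
        _ ≤ _ := by
            have := green hP hrev hlam hS n
            linarith
  have hmono : ∑ t ∈ range n, surv P S t x ≤ ∑ t ∈ range (k + 1 + n), surv P S t x :=
    sum_le_sum_of_subset_of_nonneg (range_subset_range.2 (by omega))
      fun t _ _ => surv_nonneg hP S t x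
  refine hmono.trans (hsum.trans ?_)
  set M := max (Real.log (2 * Real.exp 1 / pimin pi)) (1 / piOf pi S) with hM
  have hM1 : Real.log (1 / pimin pi) + 1 ≤ M := by
    refine le_trans ?_ (le_max_left _ _)
    have : Real.log (1 / pimin pi) + 1 = Real.log (Real.exp 1 / pimin pi) := by
      rw [div_eq_mul_inv (Real.exp 1), Real.log_mul (Real.exp_pos _).ne' (inv_pos.2 hm).ne',
        Real.log_exp, one_div]; ring
    rw [this]
    apply Real.log_le_log (by positivity)
    have := Real.exp_pos 1
    gcongr
    linarith
  have hM2 : 1 / piOf pi S ≤ M := le_max_right _ _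
  have e1 : (1 : ℝ) ≤ 1 / g := by rw [le_div_iff₀ hg0]; linarith
  calc (k + 1 : ℝ) + 2 * (1 / (g * piOf pi S))
      ≤ (Real.log (1 / pimin pi) / g + 1 / g) + 2 * (1 / (g * piOf pi S)) := by gcongr
    _ = (1 / g) * ((Real.log (1 / pimin pi) + 1) + 2 * (1 / piOf pi S)) := by
        field_simp
    _ ≤ (1 / g) * (M + 2 * M) := by gcongr
    _ = 3 / g * M := by ring

variable [MeasurableSpace G]

lemma cyl_le {P : Matrix G G ℝ} {μ : G → Measure (ℕ → G)} (hP : IsStochastic P)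
    (hμ : IsMarkovChain P μ) (S : Set G) (x : G) (n : ℕ) :
    ∀ (s : ℕ) (w : ℕ → G),
    μ x {ω | (∀ i ≤ s, ω i = w i) ∧ ∀ i, s < i → i ≤ s + n → ω i ∉ S} ≤
      ENNReal.ofReal (((if w 0 = x then 1 else 0) * ∏ i ∈ range s, P (w i) (w (i + 1)))
        * surv P S n (w s)) := by
  classical
  induction n with
  | zero =>
    intro s w
    simp only [surv, Pi.one_apply, mul_one]
    rw [← hμ.2]
    exact measure_mono fun ω h => h.1
  | succ n ih =>
    intro s w
    set c : ℝ := (if w 0 = x then 1 else 0) * ∏ i ∈ range s, P (w i) (w (i + 1)) with hc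
    have hc0 : 0 ≤ c := mul_nonneg (by split_ifs <;> norm_num) (prod_nonneg fun i _ => hP.1 _ _)
    let W : G → ℕ → G := fun z => Function.update w (s + 1) z
    have hW : ∀ z, ∀ i ≤ s, W z i = w i := fun z i hi => by
      simp only [W]; rw [Function.update_of_ne (by omega)]
    have hW' : ∀ z, W z (s + 1) = z := fun z => by simp [W]
    have hsub : {ω : ℕ → G | (∀ i ≤ s, ω i = w i) ∧ ∀ i, s < i → i ≤ s + (n + 1) → ω i ∉ S} ⊆
        ⋃ z ∈ (univ.filter fun z => z ∉ S), {ω | (∀ i ≤ s + 1, ω i = W z i) ∧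
          ∀ i, s + 1 < i → i ≤ s + 1 + n → ω i ∉ S} := by
      rintro ω ⟨h1, h2⟩
      simp only [Set.mem_iUnion, mem_filter, mem_univ, true_and]
      refine ⟨ω (s + 1), h2 _ (by omega) (by omega), ?_, fun i hi hi' => h2 i (by omega) (by omega)⟩
      intro i hi
      rcases Nat.le_succ_iff.1 hi with h | h
      · rw [hW _ i h, h1 i h]
      · subst h; rw [hW']
    refine (measure_mono hsub).trans ((measure_biUnion_finset_le _ _).trans ?_)
    calc _ ≤ ∑ z ∈ univ.filter (fun z => z ∉ S),
          ENNReal.ofReal (c * (P (w s) z * surv P S n z)) := by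
          refine sum_le_sum fun z _ => (ih (s + 1) (W z)).trans (le_of_eq ?_)
          rw [hW', hW z 0 (by omega), prod_range_succ, hW', hW z s le_rfl]
          have : ∏ i ∈ range s, P (W z i) (W z (i + 1)) = ∏ i ∈ range s, P (w i) (w (i + 1)) := by
            refine prod_congr rfl fun i hi => ?_
            have := mem_range.1 hi
            rw [hW z i (by omega), hW z (i + 1) (by omega)]
          rw [this, hc]
          congr 1; ring
      _ = ENNReal.ofReal (∑ z ∈ univ.filter (fun z => z ∉ S), c * (P (w s) z * surv P S n z)) := by
          rw [ENNReal.ofReal_sum_of_nonneg]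
          exact fun z _ => mul_nonneg hc0 (mul_nonneg (hP.1 _ _) (surv_nonneg hP S n z))
      _ ≤ _ := by
          apply ENNReal.ofReal_le_ofReal
          apply le_of_eq
          rw [← mul_sum]
          congr 1
          simp only [surv, act, kill]
          rw [sum_filter]
          refine sum_congr rfl fun z _ => ?_
          by_cases hz : z ∈ S <;> simp [hz]

/-- the event of avoiding `S` at times `1..n` -/
def avoid (S : Set G) (n : ℕ) : Set (ℕ → G) := {ω | ∀ i, 0 < i → i ≤ n → ω i ∉ S}

lemma avoid_le {P : Matrix G G ℝ} {μ : G → Measure (ℕ → G)} (hP : IsStochastic P)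
    (hμ : IsMarkovChain P μ) (S : Set G) (x : G) (n : ℕ) :
    μ x (avoid S n) ≤ ENNReal.ofReal (surv P S n x) := by
  have hsub : avoid S n ⊆ ⋃ z ∈ (univ : Finset G), {ω : ℕ → G | (∀ i ≤ 0, ω i = (fun _ => z) i) ∧
      ∀ i, 0 < i → i ≤ 0 + n → ω i ∉ S} := by
    intro ω h
    simp only [Set.mem_iUnion, mem_univ]
    refine ⟨ω 0, trivial, fun i hi => ?_, fun i h1 h2 => h i h1 (by omega)⟩
    rw [Nat.le_zero.1 hi]
  refine (measure_mono hsub).trans ((measure_biUnion_finset_le _ _).trans ?_)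
  refine (sum_le_sum fun z _ => cyl_le hP hμ S x n 0 (fun _ => z)).trans (le_of_eq ?_)
  rw [sum_eq_single x]
  · simp
  · intro b _ hb; simp [hb]
  · simp

lemma avoid_meas [MeasurableSingletonClass G] (S : Set G) (n : ℕ) :
    MeasurableSet (avoid S n) := by
  have : avoid S n = ⋂ i, ⋂ (_ : 0 < i), ⋂ (_ : i ≤ n), (fun ω : ℕ → G => ω i) ⁻¹' Sᶜ := by
    ext ω; simp [avoid]
  rw [this]
  refine MeasurableSet.iInter fun i => MeasurableSet.iInter fun _ => MeasurableSet.iInter fun _ => ?_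
  exact measurable_pi_apply i (Set.toFinite S).measurableSet.compl

lemma hitPlus_le_tsum (S : Set G) (ω : ℕ → G) :
    (hitPlus S ω : ℝ≥0∞) ≤ ∑' n, (avoid S n).indicator (fun _ => (1 : ℝ≥0∞)) ω := by
  have key : ∀ n : ℕ, (n : ℕ∞) ≤ hitPlus S ω →
      (n : ℝ≥0∞) ≤ ∑' n, (avoid S n).indicator (fun _ => (1 : ℝ≥0∞)) ω := by
    intro n hn
    refine le_trans (le_of_eq ?_) (ENNReal.sum_le_tsum (range n))
    rw [sum_congr rfl (g := fun _ => (1 : ℝ≥0∞))]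
    · simp
    · intro t ht
      rw [Set.indicator_of_mem]
      intro i hi hit hS
      have h1 : hitPlus S ω ≤ (i : ℕ∞) := sInf_le ⟨i, ⟨hi, hS⟩, rfl⟩
      have h2 : (n : ℕ∞) ≤ (i : ℕ∞) := hn.trans h1
      have h3 : n ≤ i := by exact_mod_cast h2
      have := mem_range.1 ht
      omega
  cases h : hitPlus S ω with
  | top =>
    rw [h] at key
    refine le_of_eq (Eq.symm ?_)
    rw [ENat.toENNReal_top]
    exact ENNReal.eq_top_of_forall_nnreal_le fun r => by
      obtain ⟨n, hn⟩ := exists_nat_ge r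
      exact le_trans (by exact_mod_cast hn) (key n le_top)
  | coe n =>
    rw [h] at key
    simpa using key n le_rfl

end Helpers

/-- For any nonempty `S` and any `x`,
`E_x[T_S^+] ≤ (3/(1−λ)) · max (log(2e/π_min)) (1/π(S))`. -/
theorem stmt7 {G : Type*} [Fintype G] [DecidableEq G] [MeasurableSpace G] [MeasurableSingletonClass G]
    (P : Matrix G G ℝ) (pi : G → ℝ) (μ : G → Measure (ℕ → G))
    (hP : IsStochastic P) (hirr : IsIrreducible P) (hap : IsAperiodic P)
    (hrev : IsReversible P pi) (hμ : IsMarkovChain P μ)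
    (S : Set G) (hS : S.Nonempty) (x : G) :
    expHitPlus μ S x ≤ 3 / (1 - lam P pi) *
      max (Real.log (2 * Real.exp 1 / pimin pi)) (1 / piOf pi S) := by
  have hbound : ∀ n, ∑ t ∈ range n, surv P S t x ≤ 3 / (1 - lam P pi) *
      max (Real.log (2 * Real.exp 1 / pimin pi)) (1 / piOf pi S) :=
    fun n => surv_sum hP hirr hap hrev hS x n
  have hB0 := hbound 0
  rw [range_zero, sum_empty] at hB0
  unfold expHitPlus
  refine ENNReal.toReal_le_of_le_ofReal hB0 ?_
  calc ∫⁻ ω, (hitPlus S ω : ℝ≥0∞) ∂ μ x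
      ≤ ∫⁻ ω, ∑' n, (avoid S n).indicator (fun _ => (1 : ℝ≥0∞)) ω ∂ μ x :=
        lintegral_mono fun ω => hitPlus_le_tsum S ω
    _ = ∑' n, μ x (avoid S n) := by
        rw [lintegral_tsum fun n => (measurable_const.indicator (avoid_meas S n)).aemeasurable]
        refine tsum_congr fun n => ?_
        rw [lintegral_indicator (avoid_meas S n)]
        simp
    _ ≤ _ := by
        refine ENNReal.tsum_le_of_sum_range_le fun n => ?_
        refine (sum_le_sum fun t _ => avoid_le hP hμ S x t).trans ?_
        rw [← ENNReal.ofReal_sum_of_nonneg fun t _ => surv_nonneg hP S t x]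
        exact ENNReal.ofReal_le_ofReal (hbound n)

end HM
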